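/- arXiv:2207.13445 — 3 statements merged into one kernel-verified Lean document; each statement's English description precedes it below -/
import Mathlib

section
/- Let K be an algebraic closure of 𝔽₃ and let A_K ∈ M₇(K) be the image of A under the ring map 𝔽₃ → K applied entrywise. Let S = { g ∈ M₇(K) : gᵀ·J·g = J and g·A_K = A_K·g }. Then S is a subgroup of GL₇(K) under matrix multiplication, every g ∈ S satisfies g·g = 1, any two elements of S commute (S is abelian), and S has exactly 2⁷ = 128 elements. -/
open Matrix

/-- The matrix `A` from the paper, over `𝔽₃`. -/
def A : Matrix (Fin 7) (Fin 7) (ZMod 3) :=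
  !![0,0,1,0,0,1,0;
     1,0,0,0,0,0,1;
     0,1,0,0,0,0,0;
     0,0,0,0,0,0,0;
     0,1,0,0,0,0,1;
     0,0,1,0,1,0,0;
     0,0,0,0,0,1,0]

/-- An algebraic closure of `𝔽₃`. -/
abbrev K : Type := AlgebraicClosure (ZMod 3)

/-- The 7×7 anti-diagonal identity matrix over `K` (0-indexed: entry 1 iff `i + j = 6`). -/
noncomputable def JK : Matrix (Fin 7) (Fin 7) K :=
  fun i j => if (i : ℕ) + (j : ℕ) = 6 then 1 else 0

/-- The image `A_K` of `A` in `M₇(K)` under the entrywise ring map `𝔽₃ → K`. -/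
noncomputable def AK : Matrix (Fin 7) (Fin 7) K := A.map (algebraMap (ZMod 3) K)

/-- `S = { g ∈ M₇(K) : gᵀ·J·g = J and g·A_K = A_K·g }`. -/
def S : Set (Matrix (Fin 7) (Fin 7) K) :=
  {g | gᵀ * JK * g = JK ∧ g * AK = AK * g}

/-!
Let `A` be self-adjoint for a nondegenerate form `J`, with separable, split characteristic
polynomial. Every matrix `g` commuting with `A` is a polynomial in `A`, because in an eigenbasis of
`A` it is diagonal and its diagonal entries can be interpolated on the distinct eigenvalues. Hence
`g` is again self-adjoint, `gᵀ * J * g = J * (g * g)`, and `g` is an isometry exactly when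
`g * g = 1`. In the eigenbasis these are the diagonal matrices with entries `±1`.

The `A` of the paper is self-adjoint for the antidiagonal form because it is symmetric about its
antidiagonal, and its characteristic polynomial is `X ^ 7 + X ^ 4 + 2 * X ^ 3 + X`.
-/

open Polynomial ConjAct

lemma smul_commute_smul_iff {G M : Type*} [Group G] [Monoid M] [MulDistribMulAction G M] (c : G)
    {x y : M} : Commute (c • x) (c • y) ↔ Commute x y := by
  simp only [commute_iff_eq, ← smul_mul', smul_left_cancel_iff]

section CommRing

variable {n R : Type*} [Fintype n] [DecidableEq n] [CommRing R]

/-- The matrices that preserve the bilinear form with Gram matrix `J` and commute with `A`. They are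
packaged as a submonoid of the matrix ring; its elements are units as soon as `J` is. -/
def isometryCentralizer (J A : Matrix n n R) : Submonoid (Matrix n n R) where
  carrier := {g | gᵀ * J * g = J ∧ g * A = A * g}
  one_mem' := by simp
  mul_mem' := by
    rintro g h ⟨hgJ, hgA⟩ ⟨hhJ, hhA⟩
    refine ⟨?_, (Commute.mul_left hgA hhA : Commute (g * h) A)⟩
    calc (g * h)ᵀ * J * (g * h) = hᵀ * (gᵀ * J * g) * h := by
          simp only [transpose_mul, Matrix.mul_assoc]
      _ = J := by rw [hgJ, hhJ]

lemma isSelfAdjoint_aeval {J A : Matrix n n R} (hJA : J.IsSelfAdjoint A) (p : R[X]) :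
    J.IsSelfAdjoint (aeval A p) := by
  have hpow (k : ℕ) : (A ^ k)ᵀ * J = J * A ^ k := by
    have hsemi : SemiconjBy J A Aᵀ := hJA.symm
    rw [transpose_pow]
    exact (hsemi.pow_right k).eq.symm
  rw [← mem_selfAdjointMatricesSubmodule, aeval_eq_sum_range]
  exact Submodule.sum_mem _ fun k _ =>
    Submodule.smul_mem _ _ ((mem_selfAdjointMatricesSubmodule J _).2 (hpow k))

lemma aeval_diagonal (d : n → R) (p : R[X]) :
    aeval (diagonal d) p = diagonal fun i => p.eval (d i) := by
  have heval : aeval d p = fun i => p.eval (d i) := by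
    funext i
    exact (aeval_algHom_apply (Pi.evalAlgHom R (fun _ => R) i) d p).symm
  rw [← heval]
  exact aeval_algHom_apply (diagonalAlgHom R) d p

lemma commute_diagonal_iff [NoZeroDivisors R] {d : n → R} (hd : Function.Injective d)
    {g : Matrix n n R} : Commute g (diagonal d) ↔ ∃ e, diagonal e = g := by
  constructor
  · intro hg
    have hdiag : g.IsDiag := by
      intro i j hij
      have hentry : g i j * d j = d i * g i j := by
        simpa only [mul_diagonal, diagonal_mul] using congrFun₂ hg.eq i j
      have hprod : (d j - d i) * g i j = 0 := by linear_combination hentry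
      exact (mul_eq_zero.1 hprod).resolve_left (sub_ne_zero.2 fun h => hij (hd h.symm))
    exact ⟨g.diag, hdiag.diagonal_diag⟩
  · rintro ⟨e, rfl⟩
    exact commute_diagonal e d

lemma commute_conj_diagonal_iff [NoZeroDivisors R] (c : ConjAct (Matrix n n R)ˣ) {d : n → R}
    (hd : Function.Injective d) {g : Matrix n n R} :
    Commute g (c • diagonal d) ↔ ∃ e, c • diagonal e = g := by
  obtain ⟨g, rfl⟩ := MulAction.surjective c g
  simp only [smul_commute_smul_iff, commute_diagonal_iff hd, smul_left_cancel_iff]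

lemma diagonal_mul_self_eq_one_iff [NoZeroDivisors R] {e : n → R} :
    diagonal e * diagonal e = 1 ↔ ∀ i, e i = 1 ∨ e i = -1 := by
  rw [diagonal_mul_diagonal, diagonal_eq_one, funext_iff]
  exact forall_congr' fun i => mul_self_eq_one_iff

lemma isUnit_permMatrix (σ : Equiv.Perm n) : IsUnit (σ.permMatrix R) := by
  rw [isUnit_iff_isUnit_det, det_permutation]
  exact (Equiv.Perm.sign σ).isUnit.map (Int.castRingHom R)

lemma permMatrix_isSelfAdjoint_iff {σ : Equiv.Perm n} {A : Matrix n n R} :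
    (σ.permMatrix R).IsSelfAdjoint A ↔ ∀ i j, A (σ.symm j) i = A (σ i) j := by
  rw [Matrix.IsSelfAdjoint, Matrix.IsAdjointPair, PEquiv.toMatrix_toPEquiv_mul,
    PEquiv.mul_toMatrix_toPEquiv, ← Matrix.ext_iff]
  rfl

lemma charpoly_eq_X_mul_of_row_eq_zero {m : ℕ} {A : Matrix (Fin (m + 1)) (Fin (m + 1)) R}
    {k : Fin (m + 1)} (hk : A k = 0) :
    A.charpoly = X * (A.submatrix k.succAbove k.succAbove).charpoly := by
  have hminor : (charmatrix A).submatrix k.succAbove k.succAbove =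
      charmatrix (A.submatrix k.succAbove k.succAbove) := by
    ext1 i j
    simp [charmatrix_apply, diagonal_apply]
  have hentry (j : Fin (m + 1)) (hj : j ≠ k) : charmatrix A k j = 0 := by
    simp [hk, hj.symm]
  rw [Matrix.charpoly, det_succ_row _ k, Finset.sum_eq_single k]
  · simp [hk, hminor, Matrix.charpoly, ← two_mul, pow_mul]
  · intro j _ hj
    simp [hentry j hj]
  · simp

end CommRing

section Field

variable {n F : Type*} [Fintype n] [DecidableEq n] [Field F] {J A g h : Matrix n n F}

lemma exists_conj_diagonal_of_separable_charpoly (hsplits : A.charpoly.Splits)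
    (hsep : A.charpoly.Separable) :
    ∃ (c : ConjAct (Matrix n n F)ˣ) (d : n → F), Function.Injective d ∧ c • diagonal d = A := by
  have hcard : Fintype.card n = Fintype.card (A.charpoly.rootSet F) := by
    rw [card_rootSet_eq_natDegree hsep (by simpa using hsplits), charpoly_natDegree_eq_dim]
  let root := Fintype.equivOfCardEq hcard
  let d : n → F := fun i => root i
  have hd : Function.Injective d := Subtype.val_injective.comp root.injective
  have heigenvalue (i : n) : Module.End.HasEigenvalue (toLin' A) (d i) := by
    rw [Module.End.hasEigenvalue_iff_isRoot_charpoly, charpoly_toLin']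
    simpa using (mem_rootSet.1 (root i).2).2
  choose v hv using fun i => (heigenvalue i).exists_hasEigenvector
  have hindep : LinearIndependent F v := Module.End.eigenvectors_linearIndependent' _ d hd v hv
  obtain ⟨P, hP⟩ : IsUnit (of v)ᵀ := linearIndependent_cols_iff_isUnit.1 hindep
  refine ⟨toConjAct P, d, hd, ?_⟩
  rw [units_smul_def, ofConjAct_toConjAct, Units.mul_inv_eq_iff_eq_mul, hP]
  ext i j
  rw [mul_diagonal, mul_comm]
  exact (congrFun (hv j).apply_eq_smul i).symm

lemma exists_aeval_eq_of_commute (hsplits : A.charpoly.Splits) (hsep : A.charpoly.Separable)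
    (hg : Commute g A) : ∃ p : F[X], aeval A p = g := by
  obtain ⟨c, d, hd, rfl⟩ := exists_conj_diagonal_of_separable_charpoly hsplits hsep
  obtain ⟨e, rfl⟩ := (commute_conj_diagonal_iff c hd).1 hg
  refine ⟨Lagrange.interpolate Finset.univ d e, ?_⟩
  rw [aeval_smul, aeval_diagonal]
  congr 2 with i
  exact Lagrange.eval_interpolate_at_node e hd.injOn (Finset.mem_univ i)

lemma commute_of_commute_of_separable_charpoly (hsplits : A.charpoly.Splits)
    (hsep : A.charpoly.Separable) (hg : Commute g A) (hh : Commute h A) : Commute g h := by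
  obtain ⟨p, rfl⟩ := exists_aeval_eq_of_commute hsplits hsep hg
  obtain ⟨q, rfl⟩ := exists_aeval_eq_of_commute hsplits hsep hh
  exact (Commute.all p q).map (aeval A)

lemma card_commute_and_mul_self_eq_one (h2 : ringChar F ≠ 2) (hsplits : A.charpoly.Splits)
    (hsep : A.charpoly.Separable) :
    Nat.card {g | Commute g A ∧ g * g = 1} = 2 ^ Fintype.card n := by
  classical
  obtain ⟨c, d, hd, rfl⟩ := exists_conj_diagonal_of_separable_charpoly hsplits hsep
  let signs : Finset (n → F) := Fintype.piFinset fun _ => {1, -1}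
  have himage : {g | Commute g (c • diagonal d) ∧ g * g = 1} =
      (fun e => c • diagonal e) '' (signs : Set (n → F)) := by
    ext g
    have hsigns (e : n → F) : e ∈ signs ↔ (c • diagonal e) * (c • diagonal e) = 1 := by
      rw [← smul_mul', smul_eq_iff_eq_inv_smul, smul_one, diagonal_mul_self_eq_one_iff]
      simp [signs]
    constructor
    · rintro ⟨hg, hgg⟩
      obtain ⟨e, rfl⟩ := (commute_conj_diagonal_iff c hd).1 hg
      exact ⟨e, (hsigns e).2 hgg, rfl⟩
    · rintro ⟨e, he, rfl⟩
      exact ⟨(commute_conj_diagonal_iff c hd).2 ⟨e, rfl⟩, (hsigns e).1 he⟩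
  have hinj : Function.Injective fun e : n → F => c • diagonal e :=
    (MulAction.injective c).comp diagonal_injective
  rw [himage, Nat.card_coe_set_eq, Set.ncard_image_of_injective _ hinj, Set.ncard_coe_finset,
    Fintype.card_piFinset]
  simp [Finset.card_pair (Ring.neg_one_ne_one_of_char_ne_two h2).symm]

lemma mem_isometryCentralizer_iff (hJ : IsUnit J) (hJA : J.IsSelfAdjoint A)
    (hsplits : A.charpoly.Splits) (hsep : A.charpoly.Separable) :
    g ∈ isometryCentralizer J A ↔ Commute g A ∧ g * g = 1 := by
  have hform (hg : Commute g A) : gᵀ * J * g = J ↔ g * g = 1 := by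
    obtain ⟨p, rfl⟩ := exists_aeval_eq_of_commute hsplits hsep hg
    have hadj : (aeval A p)ᵀ * J = J * aeval A p := isSelfAdjoint_aeval hJA p
    rw [hadj, Matrix.mul_assoc, hJ.mul_eq_left]
  exact and_comm.trans (and_congr_right hform)

theorem stmt1_general (h2 : ringChar F ≠ 2) (hJ : IsUnit J) (hJA : J.IsSelfAdjoint A)
    (hsplits : A.charpoly.Splits) (hsep : A.charpoly.Separable) :
    (∀ g ∈ isometryCentralizer J A, IsUnit g) ∧
    (1 : Matrix n n F) ∈ isometryCentralizer J A ∧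
    (∀ g ∈ isometryCentralizer J A, ∀ h ∈ isometryCentralizer J A,
      g * h ∈ isometryCentralizer J A) ∧
    (∀ g ∈ isometryCentralizer J A, g * g = 1) ∧
    (∀ g ∈ isometryCentralizer J A, ∀ h ∈ isometryCentralizer J A, g * h = h * g) ∧
    Nat.card (isometryCentralizer J A) = 2 ^ Fintype.card n := by
  have hmem (g : Matrix n n F) := mem_isometryCentralizer_iff (g := g) hJ hJA hsplits hsep
  have hsq : ∀ g ∈ isometryCentralizer J A, g * g = 1 := fun g hg => ((hmem g).1 hg).2
  refine ⟨fun g hg => .of_mul_eq_one g (hsq g hg), one_mem _, fun g hg h hh => mul_mem hg hh,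
    hsq, fun g hg h hh => ?_, ?_⟩
  · exact commute_of_commute_of_separable_charpoly hsplits hsep hg.2 hh.2
  · rw [← card_commute_and_mul_self_eq_one h2 hsplits hsep]
    exact Nat.card_congr (Equiv.subtypeEquivRight hmem)

end Field

lemma charpoly_submatrix_A : (A.submatrix (Fin.succAbove 3) (Fin.succAbove 3)).charpoly =
    X ^ 6 + X ^ 3 + 2 * X ^ 2 + 1 := by
  have hcharmatrix : charmatrix (A.submatrix (Fin.succAbove 3) (Fin.succAbove 3)) =
      !![ X,  0, -1,  0, -1,  0;
         -1,  X,  0,  0,  0, -1;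
          0, -1,  X,  0,  0,  0;
          0, -1,  0,  X,  0, -1;
          0,  0, -1, -1,  X,  0;
          0,  0,  0,  0, -1,  X] := by
    ext i j : 2
    fin_cases i <;> fin_cases j <;> simp [A, charmatrix, Fin.succAbove]
  have hdet : (A.submatrix (Fin.succAbove 3) (Fin.succAbove 3)).charpoly =
      X ^ 6 - 2 * X ^ 3 - 4 * X ^ 2 + 1 := by
    rw [Matrix.charpoly, hcharmatrix]
    simp [det_succ_row_zero, Fin.sum_univ_succ, Fin.succAbove]
    ring
  rw [hdet]
  linear_combination (-X ^ 3 - 2 * X ^ 2) * CharP.ofNat_eq_zero (ZMod 3)[X] 3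

lemma charpoly_A : A.charpoly = X ^ 7 + X ^ 4 + 2 * X ^ 3 + X := by
  have hrow : A 3 = 0 := by decide
  rw [charpoly_eq_X_mul_of_row_eq_zero hrow, charpoly_submatrix_A]
  ring

lemma separable_charpoly_A : A.charpoly.Separable := by
  have hderiv : derivative A.charpoly = X ^ 6 + X ^ 3 + 1 := by
    rw [charpoly_A]
    simp only [derivative_X_pow_succ, Nat.cast_ofNat, map_add, map_ofNat C, map_one, derivative_mul,
      derivative_ofNat, zero_mul, zero_add, derivative_X]
    linear_combination (2 * X ^ 6 + X ^ 3 + 2 * X ^ 2) * CharP.ofNat_eq_zero (ZMod 3)[X] 3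
  rw [separable_def, hderiv, charpoly_A]
  -- Bézout coefficients from the Euclidean algorithm over `𝔽₃`.
  refine ⟨1 + X ^ 3, 1 + 2 * X + 2 * X ^ 4, ?_⟩
  linear_combination (X ^ 10 + 2 * X ^ 7 + X ^ 6 + 2 * X ^ 4 + X ^ 3 + X) *
    CharP.ofNat_eq_zero (ZMod 3)[X] 3

lemma JK_eq_permMatrix : JK = (Fin.revPerm : Equiv.Perm (Fin 7)).permMatrix K := by
  ext i j
  have hrev : (i : ℕ) + j = 6 ↔ Fin.rev i = j := by grind
  simp [JK, PEquiv.toMatrix_apply, Equiv.toPEquiv_apply, hrev, eq_comm]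

lemma isUnit_JK : IsUnit JK := by
  rw [JK_eq_permMatrix]
  exact isUnit_permMatrix _

lemma JK_isSelfAdjoint_AK : JK.IsSelfAdjoint AK := by
  have hA : ∀ i j, A (Fin.rev j) i = A (Fin.rev i) j := by decide
  rw [JK_eq_permMatrix, permMatrix_isSelfAdjoint_iff]
  exact fun i j => congrArg (algebraMap (ZMod 3) K) (hA i j)

lemma ringChar_K_ne_two : ringChar K ≠ 2 := by
  rw [ringChar.eq K 3]
  decide

lemma separable_charpoly_AK : AK.charpoly.Separable := by
  rw [AK, charpoly_map]
  exact separable_charpoly_A.map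

/-- The stabilizer of `A` in `O₇` over the algebraic closure: every element of `S` is
invertible, `S` contains `1`, is closed under multiplication, every element squares to `1`
(so `S` is a 2-torsion subgroup of `GL₇(K)`), any two elements commute, and `S` has
exactly `2⁷ = 128` elements. -/
theorem stmt1 :
    (∀ g ∈ S, IsUnit g) ∧
    (1 : Matrix (Fin 7) (Fin 7) K) ∈ S ∧
    (∀ g ∈ S, ∀ h ∈ S, g * h ∈ S) ∧
    (∀ g ∈ S, g * g = 1) ∧
    (∀ g ∈ S, ∀ h ∈ S, g * h = h * g) ∧
    Nat.card S = 128 := by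
  exact stmt1_general ringChar_K_ne_two isUnit_JK JK_isSelfAdjoint_AK (IsAlgClosed.splits _)
    separable_charpoly_AK
end

section
/- Let M ∈ M₇(k) be self-adjoint with respect to the form ⟨·,·⟩ (i.e. M = J·Mᵀ·J). Suppose there exists m with 1 ≤ m ≤ 3 such that Mᵢⱼ = 0 whenever j ≤ m < i (the lower-left (7−m)×m block of M vanishes, making M properly blockwise triangular). Then the characteristic polynomial of M over k is not squarefree; in particular M is not regular semisimple. -/
open Matrix

/-- The 7×7 anti-diagonal identity matrix over `𝔽₃` (0-indexed: entry 1 iff `i + j = 6`). -/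
def Jmat : Matrix (Fin 7) (Fin 7) (ZMod 3) :=
  fun i j => if (i : ℕ) + (j : ℕ) = 6 then 1 else 0

/-!
Let `W` be the span of the basis vectors indexed by a set `p`, and suppose that `M` preserves `W`
and that the form with Gram matrix `J` vanishes on `W`. Write `A` and `D` for the diagonal blocks
of `M` on `p` and on its complement, and `S` for the block of `J` with rows in `p` and columns
outside it. Self-adjointness gives `S * D = Aᵀ * S`. If the characteristic polynomial
`χ_M = χ_A χ_D` is squarefree, then `χ_A` and `χ_D` are coprime, and a matrix intertwining two
matrices with coprime characteristic polynomials is zero. Hence `S = 0`, so `W` is orthogonal to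
the whole space, contradicting nondegeneracy.
-/

theorem toBlock_mul_eq_transpose_mul_toBlock_of_isSelfAdjoint
    {R n : Type*} [CommRing R] [Fintype n] {J M : Matrix n n R} {p : n → Prop} [DecidablePred p]
    (hsa : J.IsSelfAdjoint M) (hJ : J.toBlock p p = 0)
    (hM : M.toBlock (fun i => ¬p i) p = 0) :
    J.toBlock p (fun i => ¬p i) * M.toBlock (fun i => ¬p i) (fun i => ¬p i) =
      (M.toBlock p p)ᵀ * J.toBlock p fun i => ¬p i := by
  have hMt : Mᵀ.toBlock p (fun i => ¬p i) = 0 := congrArg transpose hM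
  have h : (Mᵀ * J).toBlock p (fun i => ¬p i) = (J * M).toBlock p (fun i => ¬p i) :=
    congrArg (fun N => N.toBlock p fun i => ¬p i) hsa
  rw [toBlock_mul_eq_add p p, toBlock_mul_eq_add p p, hJ, hMt, Matrix.zero_mul, Matrix.zero_mul,
    add_zero, zero_add] at h
  exact h.symm

section Intertwining

open Polynomial

theorem mul_aeval_eq_aeval_mul {R m n : Type*} [CommSemiring R] [Fintype m] [DecidableEq m]
    [Fintype n] [DecidableEq n] {S : Matrix m n R} {A : Matrix m m R} {D : Matrix n n R}
    (h : S * D = A * S) (f : R[X]) : S * aeval D f = aeval A f * S := by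
  induction f using Polynomial.induction_on' with
  | add f g hf hg => rw [map_add, map_add, Matrix.mul_add, Matrix.add_mul, hf, hg]
  | monomial k a =>
    have pow_intertwines : S * D ^ k = A ^ k * S := by
      induction k with
      | zero => simp
      | succ k ih =>
        rw [pow_succ, ← Matrix.mul_assoc, ih, Matrix.mul_assoc, h, ← Matrix.mul_assoc, pow_succ]
    rw [aeval_monomial, aeval_monomial, ← Algebra.smul_def, ← Algebra.smul_def, Matrix.mul_smul,
      Matrix.smul_mul, pow_intertwines]

variable {R m n : Type*} [CommRing R] [Fintype m] [DecidableEq m] [Fintype n] [DecidableEq n]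

theorem eq_zero_of_mul_eq_mul_of_isCoprime_charpoly {S : Matrix m n R} {A : Matrix m m R}
    {D : Matrix n n R} (h : S * D = A * S) (hAD : IsCoprime A.charpoly D.charpoly) : S = 0 := by
  obtain ⟨a, b, hab⟩ := hAD
  calc
    S = S * aeval D (A.charpoly * a + b * D.charpoly) := by
      rw [mul_comm A.charpoly, hab, map_one, Matrix.mul_one]
    _ = S * aeval D A.charpoly * aeval D a := by
      rw [map_add, map_mul, map_mul, aeval_self_charpoly, mul_zero, add_zero, Matrix.mul_assoc]
    _ = 0 := by
      rw [mul_aeval_eq_aeval_mul h, aeval_self_charpoly, Matrix.zero_mul, Matrix.zero_mul]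

variable {J M : Matrix n n R} {p : n → Prop} [DecidablePred p]

theorem charpoly_eq_mul_charpoly_toBlock (hM : M.toBlock (fun i => ¬p i) p = 0) :
    M.charpoly =
      (M.toBlock p p).charpoly * (M.toBlock (fun i => ¬p i) fun i => ¬p i).charpoly := by
  have hblocks : reindex (Equiv.sumCompl p).symm (Equiv.sumCompl p).symm M =
      fromBlocks (M.toBlock p p) (M.toBlock p fun i => ¬p i) 0
        (M.toBlock (fun i => ¬p i) fun i => ¬p i) := by
    rw [← hM]
    ext (i | i) (j | j) <;> rfl
  rw [← charpoly_reindex (Equiv.sumCompl p).symm M, hblocks, charpoly_fromBlocks_zero₂₁]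

theorem not_isCoprime_charpoly_toBlock_of_isSelfAdjoint (hdet : J.det ≠ 0)
    (hsa : J.IsSelfAdjoint M) (hp : ∃ i, p i) (hJ : J.toBlock p p = 0)
    (hM : M.toBlock (fun i => ¬p i) p = 0) :
    ¬ IsCoprime (M.toBlock p p).charpoly
      (M.toBlock (fun i => ¬p i) fun i => ¬p i).charpoly := by
  intro hcoprime
  have hS : J.toBlock p (fun i => ¬p i) = 0 :=
    eq_zero_of_mul_eq_mul_of_isCoprime_charpoly
      (toBlock_mul_eq_transpose_mul_toBlock_of_isSelfAdjoint hsa hJ hM)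
      (by rwa [charpoly_transpose])
  obtain ⟨i, hi⟩ := hp
  refine hdet (det_eq_zero_of_row_eq_zero i fun j => ?_)
  by_cases hj : p j
  · exact congrFun₂ hJ ⟨i, hi⟩ ⟨j, hj⟩
  · exact congrFun₂ hS ⟨i, hi⟩ ⟨j, hj⟩

end Intertwining

theorem stmt6_general {K n : Type*} [Field K] [Fintype n] [DecidableEq n] {J M : Matrix n n K}
    {p : n → Prop} (hdet : J.det ≠ 0) (hsa : J.IsSelfAdjoint M) (hp : ∃ i, p i)
    (hJ : J.toBlock p p = 0) (hM : M.toBlock (fun i => ¬p i) p = 0) :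
    ¬ Squarefree M.charpoly := by
  classical
  rw [charpoly_eq_mul_charpoly_toBlock hM]
  exact fun hsq => not_isCoprime_charpoly_toBlock_of_isSelfAdjoint hdet hsa hp hJ hM
    (IsRelPrime.of_squarefree_mul hsq).isCoprime

theorem Jmat_mul_self : Jmat * Jmat = 1 := by
  decide

theorem det_Jmat_ne_zero : Jmat.det ≠ 0 :=
  det_ne_zero_of_left_inverse Jmat_mul_self

theorem isSelfAdjoint_Jmat_of_eq_mul {M : Matrix (Fin 7) (Fin 7) (ZMod 3)}
    (hsa : M = Jmat * Mᵀ * Jmat) : Jmat.IsSelfAdjoint M := by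
  change Mᵀ * Jmat = Jmat * M
  conv_rhs => rw [hsa, ← mul_assoc, ← mul_assoc, Jmat_mul_self, one_mul]

theorem Jmat_toBlock_val_lt_eq_zero {m : ℕ} (hm : m ≤ 3) :
    Jmat.toBlock (fun i => (i : ℕ) < m) (fun i => (i : ℕ) < m) = 0 := by
  ext ⟨i, hi⟩ ⟨j, hj⟩
  exact if_neg (show (i : ℕ) + j ≠ 6 by omega)

/-- Lemma 2.5: a self-adjoint matrix `M ∈ M₇(𝔽₃)` (i.e. `M = J·Mᵀ·J`) which is properly
blockwise triangular — i.e. there is `1 ≤ m ≤ 3` such that `Mᵢⱼ = 0` whenever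
`j ≤ m < i` (1-indexed) — has non-squarefree characteristic polynomial; in particular
`M` is not regular semisimple. -/
theorem stmt6 (M : Matrix (Fin 7) (Fin 7) (ZMod 3))
    (hsa : M = Jmat * Mᵀ * Jmat)
    (m : ℕ) (hm1 : 1 ≤ m) (hm3 : m ≤ 3)
    (hblock : ∀ i j : Fin 7, (j : ℕ) + 1 ≤ m → m < (i : ℕ) + 1 → M i j = 0) :
    ¬ Squarefree (Matrix.charpoly M) := by
  have hM : M.toBlock (fun i => ¬(i : ℕ) < m) (fun i => (i : ℕ) < m) = 0 := by
    ext ⟨i, hi⟩ ⟨j, hj⟩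
    exact hblock i j hj (by omega)
  exact stmt6_general det_Jmat_ne_zero (isSelfAdjoint_Jmat_of_eq_mul hsa) ⟨0, hm1⟩
    (Jmat_toBlock_val_lt_eq_zero hm3) hM
end

section
/- Let A' ∈ M₇(k) be any matrix and suppose g ∈ O₇(k) is such that g⁻¹·A'·g vanishes at every position of P. Let v := g·e₁, where e₁ ∈ k⁷ is the first standard basis vector. Then v ≠ 0, the inner products ⟨v,v⟩, ⟨v,A'v⟩, ⟨A'v,A'v⟩ and ⟨A'v,A'²v⟩ all vanish, and ⟨A'²v,A'²v⟩ = c² for some c ∈ k (i.e. ⟨A'²v,A'²v⟩ is a square in k). -/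
open Matrix

/-- The symmetric bilinear form `⟨x,y⟩ = x₁y₇ + x₂y₆ + ... + x₇y₁` on `k⁷`. -/
def form (x y : Fin 7 → ZMod 3) : ZMod 3 := x ⬝ᵥ Jmat.mulVec y

/-- The set of matrix positions of Lemma 2.2 (0-indexed; in the paper's 1-indexed
convention these are (3,1),(4,1),(5,1),(5,2),(6,1),(6,2),(6,3),(7,1),(7,2),(7,3),(7,4),(7,5)). -/
def P : Set (Fin 7 × Fin 7) :=
  {(2,0),(3,0),(4,0),(4,1),(5,0),(5,1),(5,2),(6,0),(6,1),(6,2),(6,3),(6,4)}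

/-!
Put `B = g⁻¹ A' g` and `v = g e₁`. Since `g` is an isometry and `A' (g x) = g (B x)`, the inner
products among `v, A' v, A'² v` equal those among `e₁, B e₁, B² e₁`. The zero pattern of `B` places
these three vectors in the steps `1`, `2`, `4` of the standard flag of `k⁷`. Steps `i` and `j` of
the flag are orthogonal when `i + j ≤ 7`, and on step `4` the quadratic form is the square of the
middle coordinate.
-/

section AntidiagForm

variable {R : Type*} [CommSemiring R] {n : ℕ}

/-- The bilinear form on `Rⁿ` whose Gram matrix is the antidiagonal identity, encoded as the
permutation matrix of the reversal of `Fin n`. It puts the form of the theorem in arbitrary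
dimension over an arbitrary commutative semiring. -/
def antidiagForm (R : Type*) [CommSemiring R] (n : ℕ) : LinearMap.BilinForm R (Fin n → R) :=
  Matrix.toBilin' (Fin.revPerm.permMatrix R)

theorem antidiagForm_apply (x y : Fin n → R) : antidiagForm R n x y = ∑ i, x i * y i.rev := by
  simp [antidiagForm, toBilin'_apply, Equiv.Perm.permMatrix, PEquiv.toMatrix_apply]

theorem antidiagForm_mulVec_mulVec {g : Matrix (Fin n) (Fin n) R}
    (hg : gᵀ * Fin.revPerm.permMatrix R * g = Fin.revPerm.permMatrix R) (x y : Fin n → R) :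
    antidiagForm R n (g *ᵥ x) (g *ᵥ y) = antidiagForm R n x y := by
  have hcomp := Matrix.toBilin'_comp (Fin.revPerm.permMatrix R) g g
  rw [hg] at hcomp
  exact LinearMap.congr_fun₂ hcomp x y

end AntidiagForm

section Isometry

variable {R ι : Type*} [CommRing R] [Fintype ι] [DecidableEq ι]

theorem isUnit_det_of_transpose_mul_mul_eq {M g : Matrix ι ι R} (hM : IsUnit M.det)
    (hg : gᵀ * M * g = M) : IsUnit g.det := by
  rw [← hg, det_mul] at hM
  exact isUnit_of_mul_isUnit_right hM

theorem isUnit_det_permMatrix (σ : Equiv.Perm ι) : IsUnit (σ.permMatrix R).det := by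
  rw [det_permutation]
  exact (Equiv.Perm.sign σ).isUnit.map (Int.castRingHom R)

theorem mulVec_mulVec_eq_mulVec_conj {g : Matrix ι ι R} (hg : IsUnit g.det)
    (A : Matrix ι ι R) (x : ι → R) : A *ᵥ (g *ᵥ x) = g *ᵥ ((g⁻¹ * A * g) *ᵥ x) := by
  rw [mulVec_mulVec, mulVec_mulVec, Matrix.mul_assoc, mul_nonsing_inv_cancel_left _ _ hg]

end Isometry

section StdFlag

variable {R : Type*} [Semiring R] {n k l : ℕ} {x : Fin n → R}

/-- The `k`-th step of the standard flag of `Rⁿ`, spanned by the first `k` standard basis vectors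
and encoded by the vanishing of the remaining coordinates; for `n ≤ k` it is all of `Rⁿ`. -/
def stdFlag (R : Type*) [Semiring R] (n k : ℕ) : Submodule R (Fin n → R) where
  carrier := {x | ∀ i : Fin n, k ≤ i → x i = 0}
  add_mem' hx hy i hi := by rw [Pi.add_apply, hx i hi, hy i hi, add_zero]
  zero_mem' _ _ := rfl
  smul_mem' c x hx i hi := by rw [Pi.smul_apply, hx i hi, smul_zero]

theorem mem_stdFlag : x ∈ stdFlag R n k ↔ ∀ i : Fin n, k ≤ i → x i = 0 := Iff.rfl

theorem single_mem_stdFlag {i : Fin n} (hi : (i : ℕ) < k) (c : R) :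
    Pi.single i c ∈ stdFlag R n k :=
  mem_stdFlag.2 fun _ hj ↦ by
    rw [Pi.single_eq_of_ne (Fin.ne_of_val_ne (hi.trans_le hj).ne')]

theorem mulVec_mem_stdFlag {B : Matrix (Fin n) (Fin n) R}
    (hB : ∀ i j : Fin n, l ≤ i → (j : ℕ) < k → B i j = 0) (hx : x ∈ stdFlag R n k) :
    B *ᵥ x ∈ stdFlag R n l := by
  refine mem_stdFlag.2 fun i hi ↦ ?_
  rw [mulVec, dotProduct]
  refine Finset.sum_eq_zero fun j _ ↦ ?_
  obtain hj | hj := lt_or_ge (j : ℕ) k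
  · rw [hB i j hi hj, zero_mul]
  · rw [mem_stdFlag.1 hx j hj, mul_zero]

end StdFlag

section AntidiagFormStdFlag

variable {R : Type*} [CommSemiring R]

theorem antidiagForm_eq_zero_of_mem_stdFlag {n k l : ℕ} {x y : Fin n → R}
    (hx : x ∈ stdFlag R n k) (hy : y ∈ stdFlag R n l) (hkl : k + l ≤ n) :
    antidiagForm R n x y = 0 := by
  rw [antidiagForm_apply]
  refine Finset.sum_eq_zero fun i _ ↦ ?_
  obtain hi | hi := lt_or_ge (i : ℕ) k
  · rw [mem_stdFlag.1 hy i.rev (by rw [Fin.val_rev]; omega), mul_zero]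
  · rw [mem_stdFlag.1 hx i hi, zero_mul]

theorem antidiagForm_self_of_mem_stdFlag {m : ℕ} {x : Fin (2 * m + 1) → R}
    (hx : x ∈ stdFlag R (2 * m + 1) (m + 1)) :
    antidiagForm R (2 * m + 1) x x = x ⟨m, by omega⟩ ^ 2 := by
  have hrev : (⟨m, by omega⟩ : Fin (2 * m + 1)).rev = ⟨m, by omega⟩ := by
    ext; simp only [Fin.val_rev]; omega
  rw [antidiagForm_apply, Finset.sum_eq_single ⟨m, by omega⟩, hrev, sq]
  · intro i _ hi
    obtain him | him := lt_or_gt_of_ne (Fin.val_ne_of_ne hi)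
    · rw [mem_stdFlag.1 hx i.rev (by rw [Fin.val_rev]; dsimp only at him; omega), mul_zero]
    · rw [mem_stdFlag.1 hx i him, zero_mul]
  · exact fun h ↦ absurd (Finset.mem_univ _) h

end AntidiagFormStdFlag

theorem stmt9_general {R : Type*} [CommRing R] [Nontrivial R] {m a : ℕ} (hm : 0 < m) (ham : a ≤ m)
    {A g : Matrix (Fin (2 * m + 1)) (Fin (2 * m + 1)) R}
    (hg : gᵀ * Fin.revPerm.permMatrix R * g = Fin.revPerm.permMatrix R)
    (hcol : ∀ i, a ≤ i.val → (g⁻¹ * A * g) i 0 = 0)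
    (hblock : ∀ i j, m < i.val → j.val < a → (g⁻¹ * A * g) i j = 0) :
    let v := g *ᵥ Pi.single 0 1
    v ≠ 0 ∧
    antidiagForm R _ v v = 0 ∧
    antidiagForm R _ v (A *ᵥ v) = 0 ∧
    antidiagForm R _ (A *ᵥ v) (A *ᵥ v) = 0 ∧
    antidiagForm R _ (A *ᵥ v) (A *ᵥ A *ᵥ v) = 0 ∧
    ∃ c : R, antidiagForm R _ (A *ᵥ A *ᵥ v) (A *ᵥ A *ᵥ v) = c ^ 2 := by
  intro v
  have hdet : IsUnit g.det := isUnit_det_of_transpose_mul_mul_eq (isUnit_det_permMatrix _) hg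
  have he : Pi.single 0 1 ∈ stdFlag R (2 * m + 1) 1 := single_mem_stdFlag Nat.zero_lt_one 1
  have hBe : (g⁻¹ * A * g) *ᵥ Pi.single 0 1 ∈ stdFlag R (2 * m + 1) a :=
    mulVec_mem_stdFlag (fun i j hi hj ↦ by
      rw [show j = 0 from Fin.ext (Nat.lt_one_iff.1 hj)]; exact hcol i hi) he
  have hBBe := mulVec_mem_stdFlag (l := m + 1) hblock hBe
  simp only [v, mulVec_mulVec_eq_mulVec_conj hdet A, antidiagForm_mulVec_mulVec hg]
  refine ⟨?_, antidiagForm_eq_zero_of_mem_stdFlag he he (by omega),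
    antidiagForm_eq_zero_of_mem_stdFlag he hBe (by omega),
    antidiagForm_eq_zero_of_mem_stdFlag hBe hBe (by omega),
    antidiagForm_eq_zero_of_mem_stdFlag hBe hBBe (by omega),
    _, antidiagForm_self_of_mem_stdFlag hBBe⟩
  rw [← mulVec_zero g]
  exact (mulVec_injective_of_isUnit ((isUnit_iff_isUnit_det g).2 hdet)).ne
    (Pi.single_ne_zero_iff.2 one_ne_zero)

theorem Jmat_eq_permMatrix : Jmat = Fin.revPerm.permMatrix (ZMod 3) := by
  decide

theorem form_eq_antidiagForm (x y : Fin 7 → ZMod 3) : form x y = antidiagForm (ZMod 3) 7 x y := by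
  rw [form, Jmat_eq_permMatrix, antidiagForm, toBilin'_apply']

theorem mem_P_of_two_le {i : Fin 7} (hi : 2 ≤ i.val) : (i, 0) ∈ P := by
  fin_cases i <;> simp_all [P]

theorem mem_P_of_three_lt {i j : Fin 7} (hi : 3 < i.val) (hj : j.val < 2) : (i, j) ∈ P := by
  fin_cases i <;> fin_cases j <;> simp_all [P]

/-- The Lemma of Appendix A: if `A' ∈ M₇(𝔽₃)` and `g ∈ O₇(𝔽₃)` are such that
`g⁻¹·A'·g` vanishes at every position of `P`, then `v := g·e₁` is nonzero,
`⟨v,v⟩ = ⟨v,A'v⟩ = ⟨A'v,A'v⟩ = ⟨A'v,A'²v⟩ = 0`, and `⟨A'²v,A'²v⟩` is a square in `𝔽₃`. -/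
theorem stmt9 (A' : Matrix (Fin 7) (Fin 7) (ZMod 3))
    (g : Matrix (Fin 7) (Fin 7) (ZMod 3)) (hg : gᵀ * Jmat * g = Jmat)
    (hzero : ∀ p ∈ P, (g⁻¹ * A' * g) p.1 p.2 = 0) :
    let v := g.mulVec (Pi.single (0 : Fin 7) (1 : ZMod 3))
    v ≠ 0 ∧
    form v v = 0 ∧
    form v (A'.mulVec v) = 0 ∧
    form (A'.mulVec v) (A'.mulVec v) = 0 ∧
    form (A'.mulVec v) (A'.mulVec (A'.mulVec v)) = 0 ∧
    ∃ c : ZMod 3, form (A'.mulVec (A'.mulVec v)) (A'.mulVec (A'.mulVec v)) = c ^ 2 := by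
  simp only [form_eq_antidiagForm]
  exact stmt9_general (m := 3) (a := 2) (by decide) (by decide) (Jmat_eq_permMatrix ▸ hg)
    (fun i hi ↦ hzero (i, 0) (mem_P_of_two_le hi))
    fun i j hi hj ↦ hzero (i, j) (mem_P_of_three_lt hi hj)
end
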